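/- arXiv:1001.2451 — 3 statements merged into one kernel-verified Lean document; each statement's English description precedes it below -/
import Mathlib

section
/- Let n ∈ ℕ, 0 ≤ m ≤ n−1, 0 ≤ φ₁ < φ₂ < ⋯ < φ_n < 2π. Then φ₁,…,φ_n are the nodes of a positive trigonometric (n−1−m, n, dσ) quadrature formula if and only if there exist complex numbers ã₀,…,ã_{n−2} with |ã_j| < 1 for all j and ã_j = a_j for j = 0,…,n−m−2, the polynomial Φ̃_{n−1} generated by Φ̃₀ = 1 and Φ̃_j(z) = zΦ̃_{j−1}(z) − ã_{j−1}Φ̃*_{j−1}(z), and an η ∈ 𝕋 such that, with z = e^{iφ} and a fixed square root η^{1/2} of η, η^{−1/2} e^{−inφ/2} ∏_{s=1}^n (e^{iφ} − e^{iφ_s}) = 2 Re{ e^{−inφ/2} η^{1/2} Φ̃*_{n−1}(e^{iφ}) } for all φ. -/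
/-!
Put `z_s = e^{iφ_s}`. For `deg p ≤ n - 1` and `|η| = 1`, the polynomial `zp + ηp*` equals
`2 η^{1/2} e^{inφ/2} Re (e^{-inφ/2} η^{1/2} p*)` on the unit circle, so the nodal identity says that
`∏ (z - z_s)` is the para-orthogonal polynomial `zΦ̃_{n-1} + ηΦ̃*_{n-1}`. Exactness of the
quadrature formula says that the moments of `σ` and of the discrete measure `∑ μ_s δ_{z_s}` agree
up to order `n - 1 - m`.

From the formula to the identity: the inner product of the discrete measure is a Toeplitz form,
definite on polynomials of degree `< n`. Its orthogonal polynomials therefore satisfy a Szegő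
recurrence whose first `n - 1` Verblunsky coefficients lie in the open disc. Its `n`-th orthogonal
polynomial is the nodal polynomial, which has norm zero, so the last coefficient is unimodular and
the last recurrence step is the para-orthogonal representation. Agreement of the moments forces
`ã_j = a_j` for small `j`.

From the identity to the formula: by the Christoffel–Darboux formula, the kernel
`K(z, w) = ∑ Φ̃_k(z) conj Φ̃_k(w) / h_k`, with `h_k` the squared norm of `Φ̃_k`, vanishes at pairs
of distinct zeros of the para-orthogonal polynomial. The weights `1 / K(z_s, z_s)` therefore make
`Φ̃_1, …, Φ̃_{n-1}` orthogonal to `1` on the nodes, and `Φ̃_k = Φ_k` for `k ≤ n - 1 - m`.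
-/

open MeasureTheory Real Polynomial

/-- `TrigPoly l γ f` : `f` belongs to the real span of
`cos((k+γ)φ)`, `sin((k+γ)φ)` for `0 ≤ k ≤ l`. -/
def TrigPoly (l : ℕ) (γ : ℝ) (f : ℝ → ℝ) : Prop :=
  ∃ a b : ℕ → ℝ, ∀ φ : ℝ,
    f φ = ∑ k ∈ Finset.range (l + 1),
      (a k * Real.cos ((k + γ) * φ) + b k * Real.sin ((k + γ) * φ))

/-- The reversed polynomial `P*(z) = z^n conj(P(1/conj z))` at degree `n`. -/
noncomputable def pstar (n : ℕ) (P : Polynomial ℂ) : Polynomial ℂ :=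
  Polynomial.reflect n (P.map (starRingEnd ℂ))

open scoped ComplexConjugate

/-! ### Reversed polynomials -/

section Pstar

variable {k : ℕ} {p : ℂ[X]}

lemma pstar_add (p q : ℂ[X]) : pstar k (p + q) = pstar k p + pstar k q := by
  simp only [pstar, Polynomial.map_add, reflect_add]

lemma pstar_sub (p q : ℂ[X]) : pstar k (p - q) = pstar k p - pstar k q := by
  simp only [pstar, Polynomial.map_sub, reflect_sub]

lemma pstar_C_mul (c : ℂ) (p : ℂ[X]) : pstar k (C c * p) = C (conj c) * pstar k p := by
  simp only [pstar, Polynomial.map_mul, map_C, reflect_C_mul]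

lemma pstar_C_mul_X_pow {r : ℕ} (hr : r ≤ k) (c : ℂ) :
    pstar k (C c * X ^ r) = C (conj c) * X ^ (k - r) := by
  simp only [pstar, Polynomial.map_mul, map_C, Polynomial.map_pow, map_X, reflect_C_mul_X_pow,
    revAt_le hr]

lemma pstar_one (k : ℕ) : pstar k 1 = X ^ k := by
  simp only [pstar, Polynomial.map_one, reflect_one]

lemma pstar_X_pow_self (k : ℕ) : pstar k (X ^ k) = 1 := by
  simpa using pstar_C_mul_X_pow le_rfl 1

lemma pstar_pstar (k : ℕ) (p : ℂ[X]) : pstar k (pstar k p) = p := by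
  ext i
  simp [pstar]

lemma natDegree_pstar_le (hp : p.natDegree ≤ k) : (pstar k p).natDegree ≤ k :=
  natDegree_reflect_le.trans (max_le le_rfl (natDegree_map_le.trans hp))

lemma pstar_succ (hp : p.natDegree ≤ k) : pstar (k + 1) p = X * pstar k p := by
  have h := reflect_mul (1 : ℂ[X]) (p.map (starRingEnd ℂ)) (F := 1) (by simp)
    (natDegree_map_le.trans hp)
  rwa [one_mul, reflect_one, pow_one, add_comm] at h

lemma pstar_succ_X_mul (hp : p.natDegree ≤ k) : pstar (k + 1) (X * p) = pstar k p := by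
  have h := reflect_mul (X : ℂ[X]) (p.map (starRingEnd ℂ)) (F := 1) natDegree_X_le
    (natDegree_map_le.trans hp)
  rwa [reflect_one_X, one_mul, add_comm, ← map_X (starRingEnd ℂ), ← Polynomial.map_mul] at h

lemma eval_pstar (hp : p.natDegree ≤ k) {z : ℂ} (hz : ‖z‖ = 1) :
    (pstar k p).eval z = z ^ k * conj (p.eval z) := by
  refine induction_with_natDegree_le
    (fun p => (pstar k p).eval z = z ^ k * conj (p.eval z)) k ?_ ?_ ?_ p hp
  · simp [pstar]
  · intro r c _ hr
    have hzz : z ^ r * conj z ^ r = 1 := by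
      rw [← mul_pow, Complex.mul_conj', hz, Complex.ofReal_one, one_pow, one_pow]
    rw [pstar_C_mul_X_pow hr]
    simp only [eval_mul, eval_C, eval_pow, eval_X, map_mul, map_pow]
    rw [← Nat.sub_add_cancel hr, pow_add, Nat.add_sub_cancel]
    linear_combination -conj c * z ^ (k - r) * hzz
  · intro p q _ _ hp hq
    simp only [pstar_add, eval_add, map_add, mul_add, hp, hq]

end Pstar

/-! ### The Szegő recurrence -/

lemma degree_C_mul_pstar_lt {k : ℕ} {p : ℂ[X]} (hm : p.Monic) (hd : p.natDegree = k) (c : ℂ) :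
    (C c * pstar k p).degree < (X * p).degree := by
  rw [degree_eq_natDegree (monic_X.mul hm).ne_zero, natDegree_X_mul hm.ne_zero, hd]
  refine degree_le_natDegree.trans_lt (Nat.cast_lt.2 (Nat.lt_succ_of_le ?_))
  exact (natDegree_C_mul_le _ _).trans (natDegree_pstar_le hd.le)

lemma monic_szegoStep {k : ℕ} {p : ℂ[X]} (hm : p.Monic) (hd : p.natDegree = k) (c : ℂ) :
    (X * p - C c * pstar k p).Monic :=
  (monic_X.mul hm).sub_of_left (degree_C_mul_pstar_lt hm hd c)

lemma natDegree_szegoStep {k : ℕ} {p : ℂ[X]} (hm : p.Monic) (hd : p.natDegree = k) (c : ℂ) :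
    (X * p - C c * pstar k p).natDegree = k + 1 := by
  rw [natDegree_eq_of_degree_eq (degree_sub_eq_left_of_degree_lt (degree_C_mul_pstar_lt hm hd c)),
    natDegree_X_mul hm.ne_zero, hd]

/-- The monic polynomials generated by the Szegő recurrence with Verblunsky coefficients `a`. -/
noncomputable def szegoPoly (a : ℕ → ℂ) : ℕ → ℂ[X]
  | 0 => 1
  | k + 1 => X * szegoPoly a k - C (a k) * pstar k (szegoPoly a k)

section SzegoPoly

variable {a b : ℕ → ℂ}

lemma szegoPoly_zero : szegoPoly a 0 = 1 := rfl

lemma szegoPoly_succ (k : ℕ) :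
    szegoPoly a (k + 1) = X * szegoPoly a k - C (a k) * pstar k (szegoPoly a k) := rfl

lemma monic_szegoPoly_and_natDegree (k : ℕ) :
    (szegoPoly a k).Monic ∧ (szegoPoly a k).natDegree = k := by
  induction k with
  | zero => exact ⟨monic_one, natDegree_one⟩
  | succ k ih => exact ⟨monic_szegoStep ih.1 ih.2 _, natDegree_szegoStep ih.1 ih.2 _⟩

lemma szegoPoly_monic (k : ℕ) : (szegoPoly a k).Monic := (monic_szegoPoly_and_natDegree k).1

lemma natDegree_szegoPoly (k : ℕ) : (szegoPoly a k).natDegree = k :=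
  (monic_szegoPoly_and_natDegree k).2

lemma eq_szegoPoly_of_recurrence {M : ℕ} {Φ : ℕ → ℂ[X]} (h0 : Φ 0 = 1)
    (hrec : ∀ j < M, Φ (j + 1) = X * Φ j - C (a j) * pstar j (Φ j)) {k : ℕ} (hk : k ≤ M) :
    Φ k = szegoPoly a k := by
  induction k with
  | zero => exact h0
  | succ k ih => rw [hrec k hk, ih (Nat.le_of_succ_le hk), szegoPoly_succ]

lemma szegoPoly_congr {k : ℕ} (h : ∀ j < k, a j = b j) : szegoPoly a k = szegoPoly b k :=
  eq_szegoPoly_of_recurrence szegoPoly_zero (fun j hj => by rw [szegoPoly_succ, h j hj]) le_rfl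

lemma pstar_szegoPoly_succ (k : ℕ) :
    pstar (k + 1) (szegoPoly a (k + 1)) =
      pstar k (szegoPoly a k) - C (conj (a k)) * (X * szegoPoly a k) := by
  have hd := (natDegree_szegoPoly (a := a) k).le
  rw [szegoPoly_succ, pstar_sub, pstar_C_mul, pstar_succ_X_mul hd,
    pstar_succ (natDegree_pstar_le hd), pstar_pstar]

lemma eq_of_eqOn_szegoPoly {L L' : ℂ[X] →ₗ[ℂ] ℂ} {l : ℕ}
    (h : ∀ k ≤ l, L (szegoPoly a k) = L' (szegoPoly a k)) {p : ℂ[X]} (hp : p.natDegree ≤ l) :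
    L p = L' p := by
  let S : Polynomial.Sequence ℂ := ⟨szegoPoly a, fun k => by
    rw [degree_eq_natDegree (szegoPoly_monic k).ne_zero, natDegree_szegoPoly]⟩
  have hspan : p ∈ Submodule.span ℂ (S '' Set.Iic l) := by
    rw [S.span_degreeLE fun i _ => (szegoPoly_monic i).leadingCoeff ▸ isUnit_one, mem_degreeLE]
    exact natDegree_le_iff_degree_le.1 hp
  refine LinearMap.eqOn_span ?_ hspan
  rintro _ ⟨k, hk, rfl⟩
  exact h k hk

end SzegoPoly

/-! ### Christoffel–Darboux kernel and Christoffel numbers -/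

/-- The squared norm `∏ j < k, (1 - |a_j|²)` of the `k`-th polynomial orthogonal with respect to the
probability measure with Verblunsky coefficients `a`. -/
noncomputable def szegoNormSq (a : ℕ → ℂ) (k : ℕ) : ℝ :=
  ∏ j ∈ Finset.range k, (1 - ‖a j‖ ^ 2)

/-- The Christoffel–Darboux kernel of order `N`: the reproducing kernel of the polynomials of degree
at most `N` for the measure with Verblunsky coefficients `a`, conjugate-linear in the values at the
second point. -/
noncomputable def cdKernel (a : ℕ → ℂ) (N : ℕ) (z w : ℂ) : ℂ :=
  ∑ k ∈ Finset.range (N + 1),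
    conj ((szegoPoly a k).eval w) * (szegoPoly a k).eval z / szegoNormSq a k

/-- The Christoffel number `1 / K_N(z, z)`, with `K_N` the Christoffel–Darboux kernel. It is the
weight of the node `z` in the quadrature formula whose nodes are the zeros of a para-orthogonal
polynomial of degree `N + 1`. -/
noncomputable def christoffelNumber (a : ℕ → ℂ) (N : ℕ) (z : ℂ) : ℝ :=
  (∑ k ∈ Finset.range (N + 1), ‖(szegoPoly a k).eval z‖ ^ 2 / szegoNormSq a k)⁻¹

section Christoffel

variable {a : ℕ → ℂ} {N : ℕ} {z w η : ℂ}

lemma szegoNormSq_pos (ha : ∀ j, ‖a j‖ < 1) (k : ℕ) : 0 < szegoNormSq a k :=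
  Finset.prod_pos fun j _ => sub_pos.2 ((sq_lt_one_iff₀ (norm_nonneg _)).2 (ha j))

lemma szegoNormSq_succ (k : ℕ) :
    (szegoNormSq a (k + 1) : ℂ) = szegoNormSq a k * (1 - a k * conj (a k)) := by
  rw [szegoNormSq, Finset.prod_range_succ, Complex.mul_conj']
  push_cast [szegoNormSq]
  rfl

lemma christoffel_darboux (ha : ∀ k, szegoNormSq a k ≠ 0) (N : ℕ) (z w : ℂ) :
    (1 - conj w * z) * cdKernel a N z w * szegoNormSq a N =
      conj ((pstar N (szegoPoly a N)).eval w) * (pstar N (szegoPoly a N)).eval z -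
        conj (w * (szegoPoly a N).eval w) * (z * (szegoPoly a N).eval z) := by
  induction N with
  | zero => simp [cdKernel, szegoPoly_zero, pstar_one, szegoNormSq]
  | succ N ih =>
    have hne : (szegoNormSq a (N + 1) : ℂ) ≠ 0 := by exact_mod_cast ha (N + 1)
    rw [cdKernel, Finset.sum_range_succ, ← cdKernel, mul_add, add_mul, mul_assoc _ (_ / _),
      div_mul_cancel₀ _ hne, pstar_szegoPoly_succ, szegoPoly_succ, szegoNormSq_succ]
    simp only [eval_sub, eval_mul, eval_X, eval_C, map_sub, map_mul, Complex.conj_conj] at ih ⊢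
    linear_combination (1 - a N * conj (a N)) * ih

lemma cdKernel_eq_zero_of_paraorthogonal (ha : ∀ k, szegoNormSq a k ≠ 0) (hη : ‖η‖ = 1)
    (hz : z * (szegoPoly a N).eval z + η * (pstar N (szegoPoly a N)).eval z = 0)
    (hw : w * (szegoPoly a N).eval w + η * (pstar N (szegoPoly a N)).eval w = 0)
    (hw1 : ‖w‖ = 1) (hzw : z ≠ w) : cdKernel a N z w = 0 := by
  have hcd := christoffel_darboux ha N z w
  rw [eq_neg_of_add_eq_zero_left hz, eq_neg_of_add_eq_zero_left hw] at hcd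
  have hηη : conj η * η = 1 := by rw [Complex.conj_mul', hη, Complex.ofReal_one, one_pow]
  have hww : w * conj w = 1 := by rw [Complex.mul_conj', hw1, Complex.ofReal_one, one_pow]
  have hprod : (1 - conj w * z) * cdKernel a N z w * szegoNormSq a N = 0 := by
    rw [hcd, map_neg, map_mul]
    linear_combination -conj ((pstar N (szegoPoly a N)).eval w) *
      (pstar N (szegoPoly a N)).eval z * hηη
  have hne : 1 - conj w * z ≠ 0 := fun h => hzw (by linear_combination -w * h - z * hww)
  simpa [hne, ha N] using hprod

lemma cdKernel_self : cdKernel a N z z = ((christoffelNumber a N z)⁻¹ : ℝ) := by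
  rw [christoffelNumber, inv_inv, cdKernel]
  push_cast [Complex.conj_mul']
  rfl

lemma christoffelNumber_pos (ha : ∀ j, ‖a j‖ < 1) : 0 < christoffelNumber a N z := by
  refine inv_pos.2 (Finset.sum_pos' (fun k _ => ?_) ⟨0, by simp, ?_⟩)
  · exact div_nonneg (sq_nonneg _) (szegoNormSq_pos ha k).le
  · simp [szegoPoly_zero, szegoNormSq]

/-- Vanishing of the kernel at distinct nodes says that the square matrix of the values of the
`szegoPoly a k` at the nodes has a weighted adjoint as right inverse. The asserted relations say
that this adjoint is also a left inverse. -/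
lemma sum_christoffelNumber_mul_szegoPoly {ι : Type*} [Fintype ι] {ζ : ι → ℂ}
    (hcard : Fintype.card ι = N + 1) (hζ : ∀ s, ‖ζ s‖ = 1) (hinj : Function.Injective ζ)
    (ha : ∀ j, ‖a j‖ < 1) (hη : ‖η‖ = 1)
    (hzero : ∀ s, ζ s * (szegoPoly a N).eval (ζ s) +
      η * (pstar N (szegoPoly a N)).eval (ζ s) = 0) {j : ℕ} (hj : j ≤ N) :
    ∑ s, (christoffelNumber a N (ζ s) : ℂ) * (szegoPoly a j).eval (ζ s) =
      if j = 0 then 1 else 0 := by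
  classical
  have hnorm : ∀ k, szegoNormSq a k ≠ 0 := fun k => (szegoNormSq_pos ha k).ne'
  let A : Matrix ι (Fin (N + 1)) ℂ := .of fun s k => (szegoPoly a k).eval (ζ s)
  let B : Matrix (Fin (N + 1)) ι ℂ := .of fun k s =>
    conj ((szegoPoly a k).eval (ζ s)) * christoffelNumber a N (ζ s) / szegoNormSq a k
  have hAB : A * B = 1 := by
    ext s t
    have hkernel : (A * B) s t = cdKernel a N (ζ s) (ζ t) * christoffelNumber a N (ζ t) := by
      rw [Matrix.mul_apply, cdKernel, Finset.sum_range, Finset.sum_mul]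
      exact Finset.sum_congr rfl fun k _ => by simp only [A, B, Matrix.of_apply]; ring
    rw [hkernel, Matrix.one_apply]
    split_ifs with hst
    · rw [hst, cdKernel_self, ← Complex.ofReal_mul,
        inv_mul_cancel₀ (christoffelNumber_pos ha).ne', Complex.ofReal_one]
    · rw [cdKernel_eq_zero_of_paraorthogonal hnorm hη (hzero s) (hzero t) (hζ t) (hinj.ne hst),
        zero_mul]
  have hBA : B * A = 1 :=
    (Matrix.mul_eq_one_comm_of_card_eq ι _ ℂ (by simpa using hcard)).1 hAB
  have hentry := congrFun₂ hBA 0 ⟨j, Nat.lt_succ_of_le hj⟩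
  simpa [A, B, Matrix.mul_apply, Matrix.one_apply, szegoPoly_zero, szegoNormSq, Fin.ext_iff,
    eq_comm (a := 0)] using hentry

end Christoffel

/-! ### Orthogonal polynomials of a Toeplitz form -/

/-- A Hermitian form on polynomials whose matrix in the monomial basis is a Toeplitz matrix, such as
the inner product of a measure on the unit circle. It is conjugate-linear in the first argument. -/
structure IsToeplitz (B : ℂ[X] →ₗ⋆[ℂ] ℂ[X] →ₗ[ℂ] ℂ) : Prop where
  isSymm : B.IsSymm
  apply_X_mul : ∀ p q, B (X * p) (X * q) = B p q

/-- The form `B` is positive definite on the polynomials of degree less than `n`. -/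
def PosDefBelow (B : ℂ[X] →ₗ⋆[ℂ] ℂ[X] →ₗ[ℂ] ℂ) (n : ℕ) : Prop :=
  ∀ p : ℂ[X], p ≠ 0 → p.degree < n → 0 < (B p p).re

/-- `p` is a monic polynomial of degree `k` orthogonal with respect to `B` to all polynomials of
smaller degree. -/
structure IsOrthPoly (B : ℂ[X] →ₗ⋆[ℂ] ℂ[X] →ₗ[ℂ] ℂ) (k : ℕ) (p : ℂ[X]) : Prop where
  monic : p.Monic
  natDegree_eq : p.natDegree = k
  apply_eq_zero : ∀ q : ℂ[X], q.degree < k → B q p = 0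

section Toeplitz

variable {B : ℂ[X] →ₗ⋆[ℂ] ℂ[X] →ₗ[ℂ] ℂ} {k n : ℕ} {p q : ℂ[X]}

lemma apply_C_mul_left (c : ℂ) (p q : ℂ[X]) : B (C c * p) q = conj c * B p q := by
  rw [← smul_eq_C_mul, map_smulₛₗ, LinearMap.smul_apply, smul_eq_mul]

lemma apply_C_mul_right (c : ℂ) (p q : ℂ[X]) : B p (C c * q) = c * B p q := by
  rw [← smul_eq_C_mul, map_smul, smul_eq_mul]

namespace IsToeplitz

lemma apply_X_pow_add (hB : IsToeplitz B) (i j r : ℕ) :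
    B (X ^ (i + r)) (X ^ (j + r)) = B (X ^ i) (X ^ j) := by
  induction r with
  | zero => rfl
  | succ r ih => rw [← add_assoc, ← add_assoc, pow_succ', pow_succ', hB.apply_X_mul, ih]

lemma apply_X_pow_sub_comm (hB : IsToeplitz B) {i j : ℕ} (hi : i ≤ k) (hj : j ≤ k) :
    B (X ^ j) (X ^ (k - i)) = B (X ^ i) (X ^ (k - j)) := by
  wlog hij : i ≤ j generalizing i j
  · exact (this hj hi (le_of_not_ge hij)).symm
  · rw [← hB.apply_X_pow_add i (k - j) (j - i), Nat.add_sub_cancel' hij]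
    congr 2
    omega

lemma apply_pstar_comm (hB : IsToeplitz B) (hp : p.natDegree ≤ k) (hq : q.natDegree ≤ k) :
    B q (pstar k p) = B p (pstar k q) := by
  refine induction_with_natDegree_le (fun p => B q (pstar k p) = B p (pstar k q)) k ?_ ?_ ?_ p hp
  · simp [pstar]
  · intro i c _ hi
    refine induction_with_natDegree_le
      (fun q => B q (pstar k (C c * X ^ i)) = B (C c * X ^ i) (pstar k q)) k ?_ ?_ ?_ q hq
    · simp [pstar]
    · intro j d _ hj
      rw [pstar_C_mul_X_pow hi, pstar_C_mul_X_pow hj]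
      simp only [apply_C_mul_left, apply_C_mul_right]
      rw [hB.apply_X_pow_sub_comm hi hj]
      ring
    · intro q r _ _ hq hr
      rw [map_add, LinearMap.add_apply, hq, hr, pstar_add, map_add]
  · intro p r _ _ hp hr
    rw [pstar_add, map_add, hp, hr, map_add, LinearMap.add_apply]

end IsToeplitz

namespace IsOrthPoly

lemma apply_eq_conj_coeff_mul (hp : IsOrthPoly B k p) (hq : q.natDegree ≤ k) :
    B q p = conj (q.coeff k) * B p p := by
  have hlt : (q - C (q.coeff k) * p).degree < k := by
    refine (degree_lt_iff_coeff_zero _ _).2 fun i hi => ?_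
    rcases hi.eq_or_lt with rfl | hi
    · have hlead : p.coeff k = 1 := hp.natDegree_eq ▸ hp.monic.coeff_natDegree
      rw [coeff_sub, coeff_C_mul, hlead, mul_one, sub_self]
    · rw [coeff_sub, coeff_C_mul, coeff_eq_zero_of_natDegree_lt (hq.trans_lt hi),
        coeff_eq_zero_of_natDegree_lt (hp.natDegree_eq.trans_lt hi), mul_zero, sub_zero]
  have h := hp.apply_eq_zero _ hlt
  rwa [map_sub, LinearMap.sub_apply, apply_C_mul_left, sub_eq_zero] at h

lemma apply_X_pow (hp : IsOrthPoly B k p) : B (X ^ k) p = B p p := by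
  rw [hp.apply_eq_conj_coeff_mul (natDegree_X_pow_le k), coeff_X_pow_self, map_one, one_mul]

lemma apply_pstar (hp : IsOrthPoly B k p) (hB : IsToeplitz B) (hq : q.natDegree ≤ k) :
    B q (pstar k p) = conj (q.coeff 0) * B p p := by
  have hcoeff : (pstar k q).coeff k = conj (q.coeff 0) := by simp [pstar]
  rw [hB.apply_pstar_comm hp.natDegree_eq.le hq, ← hB.isSymm.eq,
    hp.apply_eq_conj_coeff_mul (natDegree_pstar_le hq), hcoeff, Complex.conj_conj, map_mul,
    hB.isSymm.eq]

lemma szegoStep (hp : IsOrthPoly B k p) (hB : IsToeplitz B) {c : ℂ}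
    (hc : c * B p p = B 1 (X * p)) : IsOrthPoly B (k + 1) (X * p - C c * pstar k p) where
  monic := monic_szegoStep hp.monic hp.natDegree_eq c
  natDegree_eq := natDegree_szegoStep hp.monic hp.natDegree_eq c
  apply_eq_zero q hq := by
    have hqk : q.natDegree ≤ k := natDegree_le_iff_degree_le.2 (Order.le_of_lt_succ hq)
    have hdivX : B q.divX p = 0 := by
      rcases eq_or_ne q 0 with rfl | hq0
      · simp
      · exact hp.apply_eq_zero _ ((degree_divX_lt hq0).trans_le (natDegree_le_iff_degree_le.1 hqk))
    have hX : B q (X * p) = conj (q.coeff 0) * B 1 (X * p) := by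
      conv_lhs => rw [← q.X_mul_divX_add, ← mul_one (C _)]
      rw [map_add, LinearMap.add_apply, hB.apply_X_mul, hdivX, zero_add, apply_C_mul_left]
    rw [map_sub, apply_C_mul_right, hX, hp.apply_pstar hB hqk, ← hc]
    ring

lemma apply_self_szegoStep (hp : IsOrthPoly B k p) (hB : IsToeplitz B) {c : ℂ}
    (hc : c * B p p = B 1 (X * p)) :
    B (X * p - C c * pstar k p) (X * p - C c * pstar k p) = (1 - c * conj c) * B p p := by
  have hXp : (X * p).natDegree ≤ k + 1 := by
    rw [natDegree_X_mul hp.monic.ne_zero, hp.natDegree_eq]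
  have hpstar : B (X ^ (k + 1)) (pstar k p) = conj (c * B p p) := by
    rw [← pstar_succ_X_mul hp.natDegree_eq.le, hB.apply_pstar_comm hXp (natDegree_X_pow_le _),
      pstar_X_pow_self, hc, hB.isSymm.eq]
  rw [← (hp.szegoStep hB hc).apply_X_pow, map_sub, apply_C_mul_right, hpstar, pow_succ',
    hB.apply_X_mul, hp.apply_X_pow, map_mul, hB.isSymm.eq]
  ring

lemma re_apply_self_pos (hp : IsOrthPoly B k p) (hpos : PosDefBelow B n) (hk : k < n) :
    0 < (B p p).re :=
  hpos p hp.monic.ne_zero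
    (degree_le_natDegree.trans_lt (by rw [hp.natDegree_eq]; exact_mod_cast hk))

lemma apply_self_ne_zero (hp : IsOrthPoly B k p) (hpos : PosDefBelow B n) (hk : k < n) :
    B p p ≠ 0 := fun h => (hp.re_apply_self_pos hpos hk).ne' (by rw [h, Complex.zero_re])

lemma eq_of_posDefBelow (hp : IsOrthPoly B k p) (hq : IsOrthPoly B k q) (hpos : PosDefBelow B k) :
    p = q := by
  have hdeg : (p - q).degree < k := by
    have h := degree_sub_lt_left (by rw [degree_eq_natDegree hp.monic.ne_zero,
      degree_eq_natDegree hq.monic.ne_zero, hp.natDegree_eq, hq.natDegree_eq]) hp.monic.ne_zero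
      (hp.monic.leadingCoeff.trans hq.monic.leadingCoeff.symm)
    rwa [degree_eq_natDegree hp.monic.ne_zero, hp.natDegree_eq] at h
  by_contra hne
  have h := hpos _ (sub_ne_zero.2 hne) hdeg
  rw [map_sub, hp.apply_eq_zero _ hdeg, hq.apply_eq_zero _ hdeg, sub_zero] at h
  exact lt_irrefl _ h

end IsOrthPoly

/-- The monic orthogonal polynomials of a Toeplitz form `B`, built by the Szegő recurrence. This is
only meaningful as long as the polynomials reached so far have nonzero norm: the recurrence divides
by `B p p`. -/
noncomputable def orthPoly (B : ℂ[X] →ₗ⋆[ℂ] ℂ[X] →ₗ[ℂ] ℂ) : ℕ → ℂ[X]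
  | 0 => 1
  | k + 1 => X * orthPoly B k -
      C (B 1 (X * orthPoly B k) / B (orthPoly B k) (orthPoly B k)) * pstar k (orthPoly B k)

/-- The Verblunsky coefficients of a Toeplitz form. -/
noncomputable def verblunsky (B : ℂ[X] →ₗ⋆[ℂ] ℂ[X] →ₗ[ℂ] ℂ) (k : ℕ) : ℂ :=
  B 1 (X * orthPoly B k) / B (orthPoly B k) (orthPoly B k)

lemma orthPoly_succ (k : ℕ) :
    orthPoly B (k + 1) = X * orthPoly B k - C (verblunsky B k) * pstar k (orthPoly B k) := rfl

lemma orthPoly_eq_szegoPoly (k : ℕ) : orthPoly B k = szegoPoly (verblunsky B) k :=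
  eq_szegoPoly_of_recurrence rfl (fun j _ => orthPoly_succ j) le_rfl

lemma isOrthPoly_orthPoly (hB : IsToeplitz B) (hpos : PosDefBelow B n) (hk : k ≤ n) :
    IsOrthPoly B k (orthPoly B k) := by
  induction k with
  | zero => exact ⟨monic_one, natDegree_one, fun q hq => by
      rw [degree_eq_bot.1 (Nat.WithBot.lt_zero_iff.1 hq), map_zero, LinearMap.zero_apply]⟩
  | succ k ih =>
    have h := ih (Nat.le_of_succ_le hk)
    exact h.szegoStep hB (div_mul_cancel₀ _ (h.apply_self_ne_zero hpos hk))

lemma apply_self_orthPoly_succ (hB : IsToeplitz B) (hpos : PosDefBelow B n) (hk : k < n) :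
    B (orthPoly B (k + 1)) (orthPoly B (k + 1)) =
      (1 - ‖verblunsky B k‖ ^ 2 : ℝ) * B (orthPoly B k) (orthPoly B k) := by
  have h := isOrthPoly_orthPoly hB hpos hk.le
  have hc : verblunsky B k * B (orthPoly B k) (orthPoly B k) = B 1 (X * orthPoly B k) :=
    div_mul_cancel₀ _ (h.apply_self_ne_zero hpos hk)
  rw [orthPoly_succ, h.apply_self_szegoStep hB hc, Complex.mul_conj']
  push_cast
  rfl

lemma norm_verblunsky_lt_one (hB : IsToeplitz B) (hpos : PosDefBelow B n) (hk : k + 1 < n) :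
    ‖verblunsky B k‖ < 1 := by
  have hk' := Nat.lt_of_succ_lt hk
  have hlt := (isOrthPoly_orthPoly hB hpos hk.le).re_apply_self_pos hpos hk
  rw [apply_self_orthPoly_succ hB hpos hk', Complex.re_ofReal_mul, mul_pos_iff_of_pos_right
    ((isOrthPoly_orthPoly hB hpos hk'.le).re_apply_self_pos hpos hk'), sub_pos] at hlt
  exact (sq_lt_one_iff₀ (norm_nonneg _)).1 hlt

lemma norm_verblunsky_eq_one (hB : IsToeplitz B) (hpos : PosDefBelow B n) (hk : k < n)
    (h0 : B (orthPoly B (k + 1)) (orthPoly B (k + 1)) = 0) : ‖verblunsky B k‖ = 1 := by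
  rw [apply_self_orthPoly_succ hB hpos hk] at h0
  have hne := (isOrthPoly_orthPoly hB hpos hk.le).apply_self_ne_zero hpos hk
  have hsq := Complex.ofReal_eq_zero.1 ((mul_eq_zero.1 h0).resolve_right hne)
  exact (pow_eq_one_iff_of_nonneg (norm_nonneg _) two_ne_zero).1 (sub_eq_zero.1 hsq).symm

lemma verblunsky_eq (hB : IsToeplitz B) (hpos : PosDefBelow B n) {a : ℕ → ℂ} {l : ℕ} (hl : l ≤ n)
    (ha : ∀ k < l, B 1 (szegoPoly a (k + 1)) = 0) (hk : k < l) : verblunsky B k = a k := by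
  induction k using Nat.strong_induction_on with
  | _ k ih =>
    have hΦ : orthPoly B k = szegoPoly a k := by
      rw [orthPoly_eq_szegoPoly, szegoPoly_congr fun j hj => ih j hj (hj.trans hk)]
    have h := isOrthPoly_orthPoly hB hpos (hk.trans_le hl).le
    have hstep := ha k hk
    have hpstar : B 1 (pstar k (orthPoly B k)) = B (orthPoly B k) (orthPoly B k) := by
      simpa using h.apply_pstar hB (q := 1) (by simp)
    rw [szegoPoly_succ, ← hΦ, map_sub, apply_C_mul_right, hpstar, sub_eq_zero] at hstep
    rw [verblunsky, hstep, mul_div_cancel_right₀ _ (h.apply_self_ne_zero hpos (hk.trans_le hl))]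

end Toeplitz

/-! ### Discrete measures on the unit circle -/

/-- The sesquilinear form on polynomials given by the discrete measure `∑ s, μ s • δ (z s)`,
conjugate-linear in the first argument. -/
noncomputable def discreteForm {ι : Type*} [Fintype ι] (μ : ι → ℝ) (z : ι → ℂ) :
    ℂ[X] →ₗ⋆[ℂ] ℂ[X] →ₗ[ℂ] ℂ :=
  LinearMap.mk₂'ₛₗ (starRingEnd ℂ) (RingHom.id ℂ)
    (fun p q => ∑ s, (μ s : ℂ) * (conj (p.eval (z s)) * q.eval (z s)))
    (fun p p' q => by simp only [eval_add, map_add, add_mul, mul_add, Finset.sum_add_distrib])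
    (fun c p q => by
      simp only [eval_smul, smul_eq_mul, map_mul, Finset.mul_sum]
      exact Finset.sum_congr rfl fun s _ => by ring)
    (fun p q q' => by simp only [eval_add, mul_add, Finset.sum_add_distrib])
    (fun c p q => by
      simp only [eval_smul, smul_eq_mul, RingHom.id_apply, Finset.mul_sum]
      exact Finset.sum_congr rfl fun s _ => by ring)

/-- The monic polynomial whose roots are the nodes `z s`. -/
noncomputable def nodalPoly {ι : Type*} [Fintype ι] (z : ι → ℂ) : ℂ[X] := ∏ s, (X - C (z s))

section Discrete

variable {ι : Type*} [Fintype ι] {μ : ι → ℝ} {z : ι → ℂ}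

lemma discreteForm_apply (p q : ℂ[X]) :
    discreteForm μ z p q = ∑ s, (μ s : ℂ) * (conj (p.eval (z s)) * q.eval (z s)) := rfl

lemma discreteForm_one (p : ℂ[X]) : discreteForm μ z 1 p = ∑ s, (μ s : ℂ) * p.eval (z s) := by
  simp only [discreteForm_apply, eval_one, map_one, one_mul]

lemma isToeplitz_discreteForm (hz : ∀ s, ‖z s‖ = 1) : IsToeplitz (discreteForm μ z) where
  isSymm := ⟨fun p q => by
    simp only [discreteForm_apply, map_sum, map_mul, Complex.conj_ofReal, Complex.conj_conj,
      mul_comm (eval _ p)]⟩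
  apply_X_mul p q := by
    refine Finset.sum_congr rfl fun s _ => ?_
    have hzz : conj (z s) * z s = 1 := by
      rw [Complex.conj_mul', hz, Complex.ofReal_one, one_pow]
    simp only [eval_mul, eval_X, map_mul]
    linear_combination μ s * conj (p.eval (z s)) * q.eval (z s) * hzz

lemma posDefBelow_discreteForm (hμ : ∀ s, 0 < μ s) (hz : Function.Injective z) :
    PosDefBelow (discreteForm μ z) (Fintype.card ι) := by
  intro p hp hdeg
  have hre : (discreteForm μ z p p).re = ∑ s, μ s * ‖p.eval (z s)‖ ^ 2 := by
    simp only [discreteForm_apply, Complex.conj_mul', ← Complex.ofReal_pow, ← Complex.ofReal_mul,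
      ← Complex.ofReal_sum, Complex.ofReal_re]
  obtain ⟨s, hs⟩ : ∃ s, p.eval (z s) ≠ 0 := by
    by_contra! h
    exact hp (eq_zero_of_natDegree_lt_card_of_eval_eq_zero p hz h
      ((natDegree_lt_iff_degree_lt hp).2 hdeg))
  rw [hre]
  exact Finset.sum_pos' (fun s _ => mul_nonneg (hμ s).le (sq_nonneg _))
    ⟨s, Finset.mem_univ s, mul_pos (hμ s) (pow_pos (norm_pos_iff.2 hs) 2)⟩

lemma eval_nodalPoly (w : ℂ) : (nodalPoly z).eval w = ∏ s, (w - z s) := by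
  simp only [nodalPoly, eval_prod, eval_sub, eval_X, eval_C]

lemma eval_nodalPoly_self (s : ι) : (nodalPoly z).eval (z s) = 0 := by
  rw [eval_nodalPoly]
  exact Finset.prod_eq_zero (Finset.mem_univ s) (sub_self _)

lemma discreteForm_nodalPoly (p : ℂ[X]) : discreteForm μ z p (nodalPoly z) = 0 := by
  simp only [discreteForm_apply, eval_nodalPoly_self, mul_zero, Finset.sum_const_zero]

lemma isOrthPoly_nodalPoly :
    IsOrthPoly (discreteForm μ z) (Fintype.card ι) (nodalPoly z) where
  monic := monic_prod_X_sub_C _ _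
  natDegree_eq := by rw [nodalPoly, natDegree_finsetProd_X_sub_C_eq_card, Finset.card_univ]
  apply_eq_zero q _ := discreteForm_nodalPoly q

end Discrete

/-! ### Quadrature formulas and para-orthogonal polynomials -/

section Quadrature

variable {ι : Type*} [Fintype ι] {z : ι → ℂ} {N l : ℕ} {L : ℂ[X] →ₗ[ℂ] ℂ} {a : ℕ → ℂ}

lemma exists_nodalPoly_eq_of_quadrature (hcard : Fintype.card ι = N + 1) (hl : l ≤ N)
    (hL : ∀ k < l, L (szegoPoly a (k + 1)) = 0) (hz : ∀ s, ‖z s‖ = 1)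
    (hinj : Function.Injective z) {μ : ι → ℝ} (hμ : ∀ s, 0 < μ s)
    (hquad : ∀ p : ℂ[X], p.natDegree ≤ l → L p = ∑ s, (μ s : ℂ) * p.eval (z s)) :
    ∃ b : ℕ → ℂ, (∀ j, ‖b j‖ < 1) ∧ (∀ j < l, b j = a j) ∧
      ∃ η : ℂ, ‖η‖ = 1 ∧
        nodalPoly z = X * szegoPoly b N + C η * pstar N (szegoPoly b N) := by
  have hB : IsToeplitz (discreteForm μ z) := isToeplitz_discreteForm hz
  have hpos : PosDefBelow (discreteForm μ z) (N + 1) := hcard ▸ posDefBelow_discreteForm hμ hinj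
  have hnodal : orthPoly (discreteForm μ z) (N + 1) = nodalPoly z :=
    (isOrthPoly_orthPoly hB hpos le_rfl).eq_of_posDefBelow (hcard ▸ isOrthPoly_nodalPoly) hpos
  have hva : ∀ k < l, verblunsky (discreteForm μ z) k = a k := fun k hk =>
    verblunsky_eq hB hpos (hl.trans N.le_succ) (fun j hj => by
      rw [discreteForm_one, ← hquad _ ((natDegree_szegoPoly _).trans_le hj), hL j hj]) hk
  refine ⟨fun j => if j < N then verblunsky (discreteForm μ z) j else 0, fun j => ?_,
    fun j hj => ?_, -verblunsky (discreteForm μ z) N, ?_, ?_⟩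
  · dsimp only
    split_ifs with hj
    · exact norm_verblunsky_lt_one hB hpos (Nat.succ_lt_succ hj)
    · simp
  · exact (if_pos (hj.trans_le hl)).trans (hva j hj)
  · rw [norm_neg, norm_verblunsky_eq_one hB hpos N.lt_succ_self
      (by rw [hnodal, discreteForm_nodalPoly])]
  · rw [szegoPoly_congr fun j hj => if_pos hj, ← orthPoly_eq_szegoPoly, ← hnodal, orthPoly_succ,
      C_neg, neg_mul, sub_eq_add_neg]

lemma exists_quadrature_of_nodalPoly_eq (hcard : Fintype.card ι = N + 1) (hl : l ≤ N)
    (hL1 : L 1 = 1) (hL : ∀ k < l, L (szegoPoly a (k + 1)) = 0) (hz : ∀ s, ‖z s‖ = 1)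
    (hinj : Function.Injective z) {b : ℕ → ℂ} (hb : ∀ j, ‖b j‖ < 1) (hba : ∀ j < l, b j = a j)
    {η : ℂ} (hη : ‖η‖ = 1)
    (hnodal : nodalPoly z = X * szegoPoly b N + C η * pstar N (szegoPoly b N)) :
    ∃ μ : ι → ℝ, (∀ s, 0 < μ s) ∧
      ∀ p : ℂ[X], p.natDegree ≤ l → L p = ∑ s, (μ s : ℂ) * p.eval (z s) := by
  refine ⟨fun s => christoffelNumber b N (z s), fun s => christoffelNumber_pos hb,
    fun p hp => ?_⟩
  have hzero : ∀ s, z s * (szegoPoly b N).eval (z s) +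
      η * (pstar N (szegoPoly b N)).eval (z s) = 0 := fun s => by
    simpa only [hnodal, eval_add, eval_mul, eval_X, eval_C] using eval_nodalPoly_self (z := z) s
  rw [← discreteForm_one]
  refine eq_of_eqOn_szegoPoly (a := b) (fun k hk => ?_) hp
  rw [discreteForm_one, sum_christoffelNumber_mul_szegoPoly hcard hz hinj hb hη hzero (hk.trans hl)]
  rcases k with _ | k
  · rw [szegoPoly_zero, hL1, if_pos rfl]
  · rw [szegoPoly_congr fun j hj => hba j (hj.trans_le hk), hL k hk, if_neg k.succ_ne_zero]

end Quadrature

/-! ### Trigonometric moments -/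

lemma coe_circleExp (φ : ℝ) : (Circle.exp φ : ℂ) = Complex.exp (Complex.I * φ) := by
  rw [Circle.coe_exp, mul_comm]

lemma re_mul_circleExp_pow (c : ℂ) (φ : ℝ) (k : ℕ) :
    (c * (Circle.exp φ : ℂ) ^ k).re = c.re * Real.cos (k * φ) - c.im * Real.sin (k * φ) := by
  rw [Circle.coe_exp, ← Complex.exp_nat_mul, ← mul_assoc, ← Complex.ofReal_natCast,
    ← Complex.ofReal_mul, Complex.mul_re, Complex.exp_ofReal_mul_I_re,
    Complex.exp_ofReal_mul_I_im]

lemma trigPoly_zero_iff_exists_polynomial {l : ℕ} {t : ℝ → ℝ} :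
    TrigPoly l 0 t ↔
      ∃ p : ℂ[X], p.natDegree ≤ l ∧ ∀ φ, t φ = (p.eval (Circle.exp φ : ℂ)).re := by
  constructor
  · rintro ⟨a, b, ht⟩
    refine ⟨∑ k ∈ Finset.range (l + 1), C (⟨a k, -b k⟩ : ℂ) * X ^ k,
      natDegree_sum_le_of_forall_le _ _ fun k hk => ?_, fun φ => ?_⟩
    · exact (natDegree_C_mul_X_pow_le _ _).trans (Finset.mem_range_succ_iff.1 hk)
    · simp only [ht, eval_finsetSum, eval_mul, eval_C, eval_pow, eval_X, Complex.re_sum,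
        re_mul_circleExp_pow, add_zero, neg_mul, sub_neg_eq_add]
  · rintro ⟨p, hp, ht⟩
    refine ⟨fun k => (p.coeff k).re, fun k => -(p.coeff k).im, fun φ => ?_⟩
    simp only [ht, eval_eq_sum_range' (Nat.lt_succ_of_le hp), Complex.re_sum,
      re_mul_circleExp_pow, add_zero, neg_mul, sub_eq_add_neg]

lemma integrable_eval_circleExp (σ : Measure ℝ) [IsFiniteMeasure σ] (p : ℂ[X]) :
    Integrable (fun φ => p.eval (Circle.exp φ : ℂ)) σ := by
  simp only [eval_eq_sum_range]
  refine integrable_finsetSum _ fun i _ => Integrable.const_mul ?_ _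
  refine Integrable.of_bound (Continuous.aestronglyMeasurable (by fun_prop)) 1 ?_
  exact Filter.Eventually.of_forall fun φ => by rw [norm_pow, Circle.norm_coe, one_pow]

/-- The moment functional of the measure `(1 / 2π) σ`, acting on polynomials in `e^{iφ}`. -/
noncomputable def momentFunctional (σ : Measure ℝ) [IsFiniteMeasure σ] : ℂ[X] →ₗ[ℂ] ℂ where
  toFun p := ((1 / (2 * π) : ℝ) : ℂ) * ∫ φ, p.eval (Circle.exp φ : ℂ) ∂σ
  map_add' p q := by
    simp only [eval_add]
    rw [integral_add (integrable_eval_circleExp σ p) (integrable_eval_circleExp σ q), mul_add]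
  map_smul' c p := by
    simp only [eval_smul, smul_eq_mul, RingHom.id_apply, integral_const_mul]
    ring

section Moments

variable {σ : Measure ℝ} [IsFiniteMeasure σ]

lemma momentFunctional_apply (p : ℂ[X]) :
    momentFunctional σ p = ((1 / (2 * π) : ℝ) : ℂ) * ∫ φ, p.eval (Circle.exp φ : ℂ) ∂σ := rfl

lemma momentFunctional_one (hnorm : (1 / (2 * π)) * ∫ _φ, (1 : ℝ) ∂σ = 1) :
    momentFunctional σ 1 = 1 := by
  simp only [momentFunctional_apply, eval_one]
  rw [← Complex.ofReal_one, integral_complex_ofReal, ← Complex.ofReal_mul, hnorm]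

lemma re_momentFunctional (p : ℂ[X]) :
    (momentFunctional σ p).re = (1 / (2 * π)) * ∫ φ, (p.eval (Circle.exp φ : ℂ)).re ∂σ := by
  rw [momentFunctional_apply, Complex.re_ofReal_mul]
  exact congrArg _ (integral_re (integrable_eval_circleExp σ p)).symm

lemma exact_on_trigPoly_iff {ι : Type*} [Fintype ι] {μ φs : ι → ℝ} {l : ℕ} :
    (∀ t, TrigPoly l 0 t → (1 / (2 * π)) * ∫ φ, t φ ∂σ = ∑ s, μ s * t (φs s)) ↔
      ∀ p : ℂ[X], p.natDegree ≤ l →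
        momentFunctional σ p = ∑ s, (μ s : ℂ) * p.eval (Circle.exp (φs s) : ℂ) := by
  constructor
  · intro h p hp
    have hre : ∀ q : ℂ[X], q.natDegree ≤ l → (momentFunctional σ q).re =
        (∑ s, (μ s : ℂ) * q.eval (Circle.exp (φs s) : ℂ)).re := fun q hq => by
      rw [re_momentFunctional, h _ (trigPoly_zero_iff_exists_polynomial.2 ⟨q, hq, fun _ => rfl⟩)]
      simp only [Complex.re_sum, Complex.re_ofReal_mul]
    refine Complex.ext (hre p hp) (neg_injective ?_)
    have him := hre (C Complex.I * p) ((natDegree_C_mul_le _ _).trans hp)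
    simpa only [← smul_eq_C_mul, map_smul, eval_smul, smul_eq_mul, mul_left_comm _ Complex.I,
      ← Finset.mul_sum, Complex.I_mul_re] using him
  · intro h t ht
    obtain ⟨p, hp, hpt⟩ := trigPoly_zero_iff_exists_polynomial.1 ht
    simp only [hpt, ← re_momentFunctional, h p hp, Complex.re_sum, Complex.re_ofReal_mul]

end Moments

/-! ### The nodal identity -/

/-- For `w = e^{-i(N+1)φ/2}` and `z = e^{iφ}` one has `conj w = w z^{N+1}`, so the two summands on
the left are complex conjugates of each other. -/
lemma rotated_paraorthogonal_eq_two_re {N : ℕ} {p : ℂ[X]} (hp : p.natDegree ≤ N) {ηh : ℂ}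
    (hη : ‖ηh‖ = 1) (φ : ℝ) :
    ηh⁻¹ * Complex.exp (-Complex.I * (N + 1 : ℕ) * φ / 2) *
        (X * p + C (ηh ^ 2) * pstar N p).eval (Circle.exp φ : ℂ) =
      ((2 * (Complex.exp (-Complex.I * (N + 1 : ℕ) * φ / 2) * ηh *
        (pstar N p).eval (Circle.exp φ : ℂ)).re : ℝ) : ℂ) := by
  set w := Complex.exp (-Complex.I * (N + 1 : ℕ) * φ / 2) with hw
  set z : ℂ := (Circle.exp φ : ℂ) with hz
  have hηη : conj ηh * ηh = 1 := by rw [Complex.conj_mul', hη, Complex.ofReal_one, one_pow]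
  have hzz : z ^ N * conj z ^ N = 1 := by
    rw [← mul_pow, Complex.mul_conj', hz, Circle.norm_coe, Complex.ofReal_one, one_pow, one_pow]
  have hconjw : conj w = w * z ^ (N + 1) := by
    rw [hw, hz, Circle.coe_exp, ← Complex.exp_conj, ← Complex.exp_nat_mul, ← Complex.exp_add]
    congr 1
    simp only [map_div₀, map_mul, map_neg, Complex.conj_I, Complex.conj_ofReal,
      Complex.conj_natCast, Complex.conj_ofNat]
    ring
  rw [← Complex.add_conj, Complex.inv_eq_conj hη, eval_add, eval_mul, eval_X, eval_mul, eval_C,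
    eval_pstar hp (Circle.norm_coe _)]
  simp only [map_mul, map_pow, Complex.conj_conj, hconjw]
  linear_combination w * ηh * z ^ N * conj (p.eval z) * hηη - conj ηh * w * z * p.eval z * hzz

lemma nodal_identity_iff {N : ℕ} {p q : ℂ[X]} (hp : p.natDegree ≤ N) {ηh : ℂ} (hη : ‖ηh‖ = 1) :
    (∀ φ : ℝ, ηh⁻¹ * Complex.exp (-Complex.I * (N + 1 : ℕ) * φ / 2) *
        q.eval (Circle.exp φ : ℂ) =
      ((2 * (Complex.exp (-Complex.I * (N + 1 : ℕ) * φ / 2) * ηh *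
        (pstar N p).eval (Circle.exp φ : ℂ)).re : ℝ) : ℂ)) ↔
      q = X * p + C (ηh ^ 2) * pstar N p := by
  refine ⟨fun h => eq_of_infinite_eval_eq _ _ (Set.infinite_of_injOn_mapsTo
    (Circle.coe_injective.comp_injOn (Circle.exp_injOn_Ico (sub_zero (2 * π)).le))
    (fun φ _ => ?_) (Set.Ico_infinite two_pi_pos)),
    fun h φ => by rw [h, rotated_paraorthogonal_eq_two_re hp hη]⟩
  have hfactor : ηh⁻¹ * Complex.exp (-Complex.I * (N + 1 : ℕ) * φ / 2) ≠ 0 :=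
    mul_ne_zero (inv_ne_zero (norm_ne_zero_iff.1 (hη ▸ one_ne_zero))) (Complex.exp_ne_zero _)
  exact mul_left_cancel₀ hfactor ((h φ).trans (rotated_paraorthogonal_eq_two_re hp hη φ).symm)

theorem stmt13_general (σ : Measure ℝ) [IsFiniteMeasure σ]
    (hnorm : (1 / (2 * π)) * ∫ _φ, (1 : ℝ) ∂σ = 1)
    {ι : Type*} [Fintype ι] {n l : ℕ} (hn : Fintype.card ι = n) (hl : l < n)
    (Φ : ℕ → Polynomial ℂ) (hΦ0 : Φ 0 = 1)
    (hΦorth : ∀ k ≤ l, ∀ j < k,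
      ∫ φ : ℝ, Complex.exp (-(j : ℂ) * Complex.I * (φ : ℂ)) *
        (Φ k).eval (Complex.exp (Complex.I * (φ : ℂ))) ∂σ = 0)
    (a : ℕ → ℂ) (hrec : ∀ j < l, Φ (j + 1) = X * Φ j - C (a j) * pstar j (Φ j))
    (φs : ι → ℝ) (hinj : Function.Injective fun s => Circle.exp (φs s)) :
    (∃ μ : ι → ℝ, (∀ s, 0 < μ s) ∧
        ∀ t : ℝ → ℝ, TrigPoly l 0 t →
          (1 / (2 * π)) * ∫ φ, t φ ∂σ = ∑ s, μ s * t (φs s)) ↔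
    (∃ b : ℕ → ℂ,
        (∀ j, ‖b j‖ < 1) ∧ (∀ j < l, b j = a j) ∧
        ∃ Φt : ℕ → Polynomial ℂ, Φt 0 = 1 ∧
          (∀ j < n - 1, Φt (j + 1) = X * Φt j - C (b j) * pstar j (Φt j)) ∧
          ∃ ηh : ℂ, ‖ηh‖ = 1 ∧
            ∀ φ : ℝ,
              ηh⁻¹ * Complex.exp (-Complex.I * n * φ / 2) *
                  ∏ s, (Complex.exp (Complex.I * (φ : ℂ)) -
                    Complex.exp (Complex.I * (φs s : ℂ))) =
                ((2 * (Complex.exp (-Complex.I * n * φ / 2) * ηh *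
                  (pstar (n - 1) (Φt (n - 1))).eval
                    (Complex.exp (Complex.I * (φ : ℂ)))).re : ℝ) : ℂ)) := by
  obtain ⟨N, rfl⟩ : ∃ N, n = N + 1 := Nat.exists_eq_succ_of_ne_zero (Nat.ne_zero_of_lt hl)
  have hl' : l ≤ N := Nat.le_of_lt_succ hl
  have hinj' : Function.Injective fun s => (Circle.exp (φs s) : ℂ) :=
    Circle.coe_injective.comp hinj
  simp only [← coe_circleExp, Nat.add_sub_cancel, exact_on_trigPoly_iff, ← eval_nodalPoly]
    at hΦorth ⊢
  have hL : ∀ k < l, momentFunctional σ (szegoPoly a (k + 1)) = 0 := fun k hk => by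
    rw [momentFunctional_apply, ← eq_szegoPoly_of_recurrence hΦ0 hrec hk]
    simpa using hΦorth (k + 1) hk 0 k.succ_pos
  constructor
  · rintro ⟨μ, hμ, hquad⟩
    obtain ⟨b, hb, hba, η, hη, hnodal⟩ := exists_nodalPoly_eq_of_quadrature hn hl' hL
      (fun s => Circle.norm_coe _) hinj' hμ hquad
    obtain ⟨ηh, rfl⟩ := IsAlgClosed.exists_pow_nat_eq η two_pos
    have hηh : ‖ηh‖ = 1 := by
      rwa [norm_pow, pow_eq_one_iff_of_nonneg (norm_nonneg _) two_ne_zero] at hη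
    exact ⟨b, hb, hba, szegoPoly b, szegoPoly_zero, fun j _ => szegoPoly_succ j, ηh, hηh,
      (nodal_identity_iff (natDegree_szegoPoly N).le hηh).2 hnodal⟩
  · rintro ⟨b, hb, hba, Φt, hΦt0, hΦt, ηh, hηh, hnodal⟩
    rw [eq_szegoPoly_of_recurrence hΦt0 hΦt le_rfl,
      nodal_identity_iff (natDegree_szegoPoly N).le hηh] at hnodal
    exact exists_quadrature_of_nodalPoly_eq hn hl' (momentFunctional_one hnorm) hL
      (fun s => Circle.norm_coe _) hinj' hb hba (by rw [norm_pow, hηh, one_pow]) hnodal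

theorem stmt13
    (σ : Measure ℝ) [IsFiniteMeasure σ]
    (hsupp : σ (Set.Icc 0 (2 * π))ᶜ = 0)
    (hnorm : (1 / (2 * π)) * ∫ _φ, (1 : ℝ) ∂σ = 1)
    -- the orthogonal polynomials `Φ` and their Verblunsky coefficients `a`
    (Φ : ℕ → Polynomial ℂ) (hΦ0 : Φ 0 = 1)
    (hΦmonic : ∀ k, (Φ k).Monic) (hΦdeg : ∀ k, (Φ k).natDegree = k)
    (hΦorth : ∀ k : ℕ, ∀ j < k,
      ∫ φ : ℝ, Complex.exp (-(j : ℂ) * Complex.I * (φ : ℂ)) *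
        (Φ k).eval (Complex.exp (Complex.I * (φ : ℂ))) ∂σ = 0)
    (a : ℕ → ℂ) (ha : ∀ j, ‖a j‖ < 1)
    (hrec : ∀ j, Φ (j + 1) = X * Φ j - C (a j) * pstar j (Φ j))
    -- the nodes
    (n : ℕ) (hn : 1 ≤ n) (m : ℕ) (hm : m ≤ n - 1)
    (φs : Fin n → ℝ) (hmono : StrictMono φs)
    (hrange : ∀ s, φs s ∈ Set.Ico 0 (2 * π)) :
    -- `φ₁, …, φ_n` are the nodes of a positive trigonometric `(n-1-m, n, dσ)` qf
    (∃ μ : Fin n → ℝ, (∀ s, 0 < μ s) ∧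
        ∀ t : ℝ → ℝ, TrigPoly (n - 1 - m) 0 t →
          (1 / (2 * π)) * ∫ φ, t φ ∂σ = ∑ s, μ s * t (φs s)) ↔
    -- the nodes polynomial representation via the recurrence relation
    (∃ at_ : ℕ → ℂ,
        (∀ j, ‖at_ j‖ < 1) ∧ (∀ j, j + m + 1 < n → at_ j = a j) ∧
        ∃ Φt : ℕ → Polynomial ℂ, Φt 0 = 1 ∧
          (∀ j < n - 1, Φt (j + 1) = X * Φt j - C (at_ j) * pstar j (Φt j)) ∧
          ∃ ηh : ℂ, ‖ηh‖ = 1 ∧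
            ∀ φ : ℝ,
              ηh⁻¹ * Complex.exp (-Complex.I * n * φ / 2) *
                  ∏ s, (Complex.exp (Complex.I * (φ : ℂ)) -
                    Complex.exp (Complex.I * (φs s : ℂ))) =
                ((2 * (Complex.exp (-Complex.I * n * φ / 2) * ηh *
                  (pstar (n - 1) (Φt (n - 1))).eval
                    (Complex.exp (Complex.I * (φ : ℂ)))).re : ℝ) : ℂ)) := by
  simp only [show ∀ j, j + m + 1 < n ↔ j < n - 1 - m by omega]
  exact stmt13_general σ hnorm (Fintype.card_fin n) (by omega) Φ hΦ0 (fun k _ => hΦorth k) a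
    (fun j _ => hrec j) φs fun s t h => hmono.injective
      (Circle.exp_injOn_Ico (sub_zero (2 * π)).le (hrange s) (hrange t) h)
end

section
/- Let μ be a positive measure on [0,2π], let ñ ∈ ℕ, γ ∈ {0, 1/2}, and n = 2(ñ+γ). Let P_{n−1}(z) = z^{n−1} + ⋯ be a monic polynomial of degree n−1 satisfying ∫₀^{2π} e^{−ikφ} P_{n−1}(e^{iφ}) dμ(φ) = 0 for k = 0,…,n−2. Then for every η ∈ 𝕋 (with η^{1/2} a fixed square root of η) one has ∫₀^{2π} t(φ) · Re{ η^{1/2} e^{−inφ/2} P*_{n−1}(e^{iφ}) } dμ(φ) = 0 for every t ∈ 𝒯_{ñ−1,γ}. -/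
/-!
On the unit circle `P*(z) = z ^ (n - 1) * conj (P z)`, so with `z = exp (iφ)` the kernel
`exp (-inφ/2) P*(z)` equals `exp (i(n/2 - 1)φ) conj (P z)`. Since `n/2 - 1 = ñ - 1 + γ`, the factor
`exp (i(n/2 - 1)φ)` is exactly what turns `t ∈ 𝒯_{ñ-1,γ}` into an algebraic polynomial `Q(z)` of
degree at most `n - 2`. The integrand is therefore the real part of `η^(1/2) Q(z) conj (P z)`,
which integrates to zero because `P` is orthogonal to all polynomials of degree at most `n - 2`.
-/

open MeasureTheory Real Polynomial

open scoped ComplexConjugate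

lemma eval_pstar_s14 {N : ℕ} {P : ℂ[X]} (hP : P.natDegree ≤ N) {z : ℂ} (hz : z ≠ 0) :
    (pstar N P).eval z = z ^ N * conj (P.eval (conj z)⁻¹) := by
  have hdeg : (P.map (starRingEnd ℂ)).natDegree ≤ N := natDegree_map_le.trans hP
  let _ : Invertible z⁻¹ := invertibleOfNonzero (inv_ne_zero hz)
  have hreflect : (pstar N P).eval z * z⁻¹ ^ N = (P.map (starRingEnd ℂ)).eval z⁻¹ := by
    simpa only [pstar, invOf_eq_inv, inv_inv, eval₂_id] using
      eval₂_reflect_mul_pow (RingHom.id ℂ) z⁻¹ N _ hdeg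
  have hconj : (P.map (starRingEnd ℂ)).eval z⁻¹ = conj (P.eval (conj z)⁻¹) := by
    rw [← eval_map_apply, map_inv₀, Complex.conj_conj]
  rw [← hconj, ← hreflect, inv_pow]
  field_simp

lemma eval_pstar_of_norm_eq_one {N : ℕ} {P : ℂ[X]} (hP : P.natDegree ≤ N) {z : ℂ}
    (hz : ‖z‖ = 1) : (pstar N P).eval z = z ^ N * conj (P.eval z) := by
  have hz0 : z ≠ 0 := norm_ne_zero_iff.1 (hz ▸ one_ne_zero)
  rw [eval_pstar_s14 hP hz0, ← Complex.inv_eq_conj hz, inv_inv]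

lemma exp_mul_eval_pstar {N : ℕ} {P : ℂ[X]} (hP : P.natDegree ≤ N) (φ : ℝ) :
    Complex.exp (-Complex.I * (N + 1) * φ / 2) *
        (pstar N P).eval (Complex.exp (Complex.I * φ)) =
      Complex.exp (Complex.I * ((N - 1) / 2 * φ)) *
        conj (P.eval (Complex.exp (Complex.I * φ))) := by
  rw [eval_pstar_of_norm_eq_one hP (Complex.norm_exp_I_mul_ofReal φ), ← mul_assoc,
    ← Complex.exp_nat_mul, ← Complex.exp_add]
  congr 2
  ring

lemma cos_add_sin_mul_exp (a b θ α : ℂ) :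
    (a * Complex.cos θ + b * Complex.sin θ) * Complex.exp (Complex.I * α) =
      (a - b * Complex.I) / 2 * Complex.exp (Complex.I * (α + θ)) +
        (a + b * Complex.I) / 2 * Complex.exp (Complex.I * (α - θ)) := by
  have hadd : Complex.exp (Complex.I * (α + θ)) =
      Complex.exp (Complex.I * α) * Complex.exp (θ * Complex.I) := by
    rw [← Complex.exp_add]
    ring_nf
  have hsub : Complex.exp (Complex.I * (α - θ)) =
      Complex.exp (Complex.I * α) * Complex.exp (-θ * Complex.I) := by
    rw [← Complex.exp_add]
    ring_nf
  rw [hadd, hsub, Complex.cos, Complex.sin]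
  ring

lemma TrigPoly.exists_polynomial {l d : ℕ} {t : ℝ → ℝ} (ht : TrigPoly l ((d : ℝ) / 2) t) :
    ∃ Q : ℂ[X], Q.natDegree ≤ 2 * l + d ∧ ∀ φ : ℝ,
      t φ * Complex.exp (Complex.I * ((l + d / 2) * φ)) =
        Q.eval (Complex.exp (Complex.I * φ)) := by
  obtain ⟨a, b, ht⟩ := ht
  refine ⟨∑ k ∈ Finset.range (l + 1), (C ((a k - b k * Complex.I) / 2) * X ^ (l + d + k) +
    C ((a k + b k * Complex.I) / 2) * X ^ (l - k)), ?_, fun φ => ?_⟩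
  · refine natDegree_sum_le_of_forall_le _ _ fun k hk => ?_
    have hkl : k ≤ l := Finset.mem_range_succ_iff.1 hk
    exact natDegree_add_le_of_degree_le
      ((natDegree_C_mul_X_pow_le _ _).trans (by lia))
      ((natDegree_C_mul_X_pow_le _ _).trans (by lia))
  · rw [ht φ, Complex.ofReal_sum, Finset.sum_mul, eval_finsetSum]
    refine Finset.sum_congr rfl fun k hk => ?_
    have hkl : k ≤ l := Finset.mem_range_succ_iff.1 hk
    push_cast
    rw [cos_add_sin_mul_exp]
    simp only [eval_add, eval_mul, eval_C, eval_pow, eval_X, ← Complex.exp_nat_mul]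
    push_cast [hkl]
    ring_nf

lemma TrigPoly.exists_mul_exp_mul_eval_pstar_eq {l d n : ℕ} {t : ℝ → ℝ}
    (ht : TrigPoly l ((d : ℝ) / 2) t) (hn : n = 2 * (l + 1) + d) {P : ℂ[X]}
    (hP : P.natDegree ≤ n - 1) :
    ∃ Q : ℂ[X], Q.natDegree < n - 1 ∧ ∀ φ : ℝ,
      t φ * (Complex.exp (-Complex.I * n * φ / 2) *
        (pstar (n - 1) P).eval (Complex.exp (Complex.I * φ))) =
        Q.eval (Complex.exp (Complex.I * φ)) *
          conj (P.eval (Complex.exp (Complex.I * φ))) := by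
  obtain ⟨Q, hQdeg, hQ⟩ := ht.exists_polynomial
  refine ⟨Q, by lia, fun φ => ?_⟩
  have hpred : n - 1 = 2 * l + d + 1 := by lia
  have hcast : (n : ℂ) = (n - 1 : ℕ) + 1 := by
    norm_cast
    lia
  have hfreq : (((n - 1 : ℕ) : ℂ) - 1) / 2 = l + d / 2 := by
    rw [hpred]
    push_cast
    ring
  rw [hcast, exp_mul_eval_pstar hP, hfreq, ← mul_assoc, hQ]

lemma integral_eval_mul_eq_zero {α 𝕜 : Type*} [MeasurableSpace α] [RCLike 𝕜] {μ : Measure α}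
    {f g : α → 𝕜} {N : ℕ} {Q : 𝕜[X]} (hQ : Q.natDegree < N)
    (hint : ∀ k < N, Integrable (fun x => f x ^ k * g x) μ)
    (hzero : ∀ k < N, ∫ x, f x ^ k * g x ∂μ = 0) :
    ∫ x, Q.eval (f x) * g x ∂μ = 0 := by
  simp_rw [eval_eq_sum_range' hQ, Finset.sum_mul, mul_assoc]
  rw [integral_finsetSum _ fun k hk => (hint k (Finset.mem_range.1 hk)).const_mul _]
  refine Finset.sum_eq_zero fun k hk => ?_
  rw [integral_const_mul, hzero k (Finset.mem_range.1 hk), mul_zero]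

section UnitCircle

variable {μ : Measure ℝ}

lemma integrable_comp_exp_I_mul {E : Type*} [NormedAddCommGroup E] [IsFiniteMeasure μ]
    {F : ℂ → E} (hF : Continuous F) :
    Integrable (fun φ : ℝ => F (Complex.exp (Complex.I * φ))) μ := by
  obtain ⟨B, hB⟩ := (isCompact_sphere (0 : ℂ) 1).exists_bound_of_continuousOn hF.continuousOn
  have hcont : Continuous fun φ : ℝ => F (Complex.exp (Complex.I * φ)) := by fun_prop
  refine Integrable.of_bound hcont.aestronglyMeasurable B (.of_forall fun φ => hB _ ?_)
  rw [mem_sphere_zero_iff_norm, Complex.norm_exp_I_mul_ofReal]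

lemma integral_exp_pow_mul_conj_eval (P : ℂ[X]) (k : ℕ) :
    ∫ φ : ℝ, Complex.exp (Complex.I * φ) ^ k *
        conj (P.eval (Complex.exp (Complex.I * φ))) ∂μ =
      conj (∫ φ : ℝ, Complex.exp (-(k : ℂ) * Complex.I * φ) *
        P.eval (Complex.exp (Complex.I * φ)) ∂μ) := by
  rw [← integral_conj]
  congr with φ
  rw [map_mul, ← Complex.exp_nat_mul, ← Complex.exp_conj]
  simp [mul_assoc]

lemma integral_eval_mul_conj_eval_eq_zero [IsFiniteMeasure μ] {P Q : ℂ[X]} {N : ℕ}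
    (horth : ∀ k < N, ∫ φ : ℝ, Complex.exp (-(k : ℂ) * Complex.I * φ) *
      P.eval (Complex.exp (Complex.I * φ)) ∂μ = 0)
    (hQ : Q.natDegree < N) :
    ∫ φ : ℝ, Q.eval (Complex.exp (Complex.I * φ)) *
      conj (P.eval (Complex.exp (Complex.I * φ))) ∂μ = 0 := by
  refine integral_eval_mul_eq_zero hQ (fun k _ => ?_) fun k hk => ?_
  · exact integrable_comp_exp_I_mul (F := fun z => z ^ k * conj (P.eval z)) (by fun_prop)
  · rw [integral_exp_pow_mul_conj_eval, horth k hk, map_zero]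

end UnitCircle

theorem stmt14_general
    (μ : Measure ℝ) [IsFiniteMeasure μ]
    (ntil d : ℕ) (hntil : 1 ≤ ntil) (n : ℕ) (hn : n = 2 * ntil + d)
    (P : Polynomial ℂ) (hPdeg : P.natDegree ≤ n - 1)
    (horth : ∀ k < n - 1,
      ∫ φ : ℝ, Complex.exp (-(k : ℂ) * Complex.I * (φ : ℂ)) *
        P.eval (Complex.exp (Complex.I * (φ : ℂ))) ∂μ = 0)
    (ηh : ℂ) (t : ℝ → ℝ) (ht : TrigPoly (ntil - 1) ((d : ℝ) / 2) t) :
    ∫ φ : ℝ, t φ *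
      (ηh * Complex.exp (-Complex.I * n * φ / 2) *
        (pstar (n - 1) P).eval (Complex.exp (Complex.I * (φ : ℂ)))).re ∂μ = 0 := by
  obtain ⟨Q, hQdeg, hQ⟩ := ht.exists_mul_exp_mul_eval_pstar_eq (by lia) hPdeg
  let F : ℂ → ℂ := fun z => ηh * (Q.eval z * conj (P.eval z))
  have hre (φ : ℝ) : t φ * (ηh * Complex.exp (-Complex.I * n * φ / 2) *
      (pstar (n - 1) P).eval (Complex.exp (Complex.I * φ))).re =
        (F (Complex.exp (Complex.I * φ))).re := by
    rw [← Complex.re_ofReal_mul, mul_assoc ηh, mul_left_comm, hQ φ]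
  have hF : ∫ φ : ℝ, F (Complex.exp (Complex.I * φ)) ∂μ = 0 := by
    rw [integral_const_mul, integral_eval_mul_conj_eval_eq_zero horth hQdeg, mul_zero]
  have hre_integral : ∫ φ : ℝ, (F (Complex.exp (Complex.I * φ))).re ∂μ =
      (∫ φ : ℝ, F (Complex.exp (Complex.I * φ)) ∂μ).re :=
    integral_re (integrable_comp_exp_I_mul (F := F) (by fun_prop))
  simp_rw [hre]
  rw [hre_integral, hF, Complex.zero_re]

theorem stmt14
    (μ : Measure ℝ) [IsFiniteMeasure μ]
    (hsupp : μ (Set.Icc 0 (2 * π))ᶜ = 0)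
    (ntil d : ℕ) (hntil : 1 ≤ ntil) (hd : d = 0 ∨ d = 1)
    (n : ℕ) (hn : n = 2 * ntil + d)
    (P : Polynomial ℂ) (hPmonic : P.Monic) (hPdeg : P.natDegree = n - 1)
    (horth : ∀ k < n - 1,
      ∫ φ : ℝ, Complex.exp (-(k : ℂ) * Complex.I * (φ : ℂ)) *
        P.eval (Complex.exp (Complex.I * (φ : ℂ))) ∂μ = 0) :
    ∀ ηh : ℂ, ‖ηh‖ = 1 →
      ∀ t : ℝ → ℝ, TrigPoly (ntil - 1) ((d : ℝ) / 2) t →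
        ∫ φ : ℝ, t φ *
          (ηh * Complex.exp (-Complex.I * n * φ / 2) *
            (pstar (n - 1) P).eval (Complex.exp (Complex.I * (φ : ℂ)))).re ∂μ = 0 :=
  fun ηh _ => stmt14_general μ ntil d hntil n hn P hPdeg.le horth ηh
end

section
/- Let m, n ∈ ℕ₀ with 0 ≤ m ≤ 2n−1, let ψ be a positive measure on [−1,1], and let σ be the measure on [−π,π] defined by σ(φ) = ψ(1) − ψ(cos φ) for 0 ≤ φ ≤ π and σ(φ) = ψ(cos φ) − ψ(1) for −π ≤ φ ≤ 0. Let −1 < x_n < ⋯ < x₁ < 1, λ₁,…,λ_n > 0, and set φ_s = arccos x_s, so 0 < φ₁ < ⋯ < φ_n < π. Then ∫_{−1}^{1} p(x) dψ(x) = Σ_{s=1}^n λ_s p(x_s) for every real polynomial p of degree ≤ 2n−1−m if and only if ∫_{−π}^{π} t(φ) dσ(φ) = Σ_{s=1}^n λ_s (t(φ_s) + t(−φ_s)) for every trigonometric polynomial t of degree ≤ 2n−1−m. -/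
open MeasureTheory Real Polynomial

/-!
The measure `σ` is the sum of the images of `ψ` under the two branches `± arccos` of the inverse of
`cos`, so integrating `t` against `σ` amounts to integrating the symmetrization `t φ + t (-φ)`, read
as a function of `y = cos φ`, against `ψ`. For a trigonometric polynomial `t` the symmetrization
loses the sine part of `t` and doubles the cosine part, which is `q (cos φ)` with `q = ∑ a_k T_k`.
Since `T_0, …, T_l` span the polynomials of degree at most `l`, every polynomial `q` of degree at
most `l` arises in this way, and the two quadrature formulas are the same up to the factor `2`.
-/

theorem natDegree_le_iff_exists_sum_chebyshev_T {R : Type*} [CommRing R] [IsDomain R]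
    [Invertible (2 : R)] {l : ℕ} {p : R[X]} :
    p.natDegree ≤ l ↔
      ∃ a : ℕ → R, ∑ k ∈ Finset.range (l + 1), C (a k) * Chebyshev.T R k = p := by
  have hspan : Submodule.span R (Chebyshev.chebyshevTsequence R '' Finset.range (l + 1)) =
      degreeLT R (l + 1) := by
    rw [Finset.coe_range]
    refine Sequence.span_degreeLT _ fun k _ => ?_
    change IsUnit (Chebyshev.T R k).leadingCoeff
    rw [Chebyshev.leadingCoeff_T]
    exact (isUnit_of_invertible 2).pow _
  rw [natDegree_le_iff_degree_le, ← mem_degreeLE, ← degreeLT_succ_eq_degreeLE, ← hspan,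
    Submodule.mem_span_image_finset_iff_exists_fun']
  simp only [smul_eq_C_mul]
  rfl

theorem eval_cos_sum_chebyshev_T (l : ℕ) (a : ℕ → ℝ) (φ : ℝ) :
    (∑ k ∈ Finset.range (l + 1), C (a k) * Chebyshev.T ℝ k).eval (cos φ) =
      ∑ k ∈ Finset.range (l + 1), a k * cos (k * φ) := by
  simp only [eval_finsetSum, eval_mul, eval_C, Chebyshev.T_real_cos, Int.cast_natCast]

theorem TrigPoly.continuous {l : ℕ} {γ : ℝ} {t : ℝ → ℝ} (ht : TrigPoly l γ t) :
    Continuous t := by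
  obtain ⟨a, b, h⟩ := ht
  rw [funext h]
  fun_prop

theorem trigPoly_eval_cos {l : ℕ} {p : ℝ[X]} (hp : p.natDegree ≤ l) :
    TrigPoly l 0 (fun φ => p.eval (cos φ)) := by
  obtain ⟨a, rfl⟩ := natDegree_le_iff_exists_sum_chebyshev_T.1 hp
  exact ⟨a, 0, fun φ => by simp [eval_cos_sum_chebyshev_T]⟩

theorem TrigPoly.exists_add_neg_eq_eval_cos {l : ℕ} {t : ℝ → ℝ} (ht : TrigPoly l 0 t) :
    ∃ q : ℝ[X], q.natDegree ≤ l ∧ ∀ φ, t φ + t (-φ) = 2 * q.eval (cos φ) := by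
  obtain ⟨a, b, h⟩ := ht
  refine ⟨_, natDegree_le_iff_exists_sum_chebyshev_T.2 ⟨a, rfl⟩, fun φ => ?_⟩
  rw [h, h, eval_cos_sum_chebyshev_T, ← Finset.sum_add_distrib, Finset.mul_sum]
  refine Finset.sum_congr rfl fun k _ => ?_
  rw [add_zero, mul_neg, cos_neg, sin_neg]
  ring

theorem integrable_of_continuousOn_of_ae_mem_isCompact {X E : Type*} [TopologicalSpace X]
    [T2Space X] [MeasurableSpace X] [OpensMeasurableSpace X] [NormedAddCommGroup E]
    {μ : Measure X} [IsFiniteMeasureOnCompacts μ] {K : Set X} {f : X → E}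
    (hf : ContinuousOn f K) (hK : IsCompact K) (hμ : ∀ᵐ x ∂μ, x ∈ K) : Integrable f μ := by
  rw [← Measure.restrict_eq_self_of_ae_mem hμ]
  exact hf.integrableOn_compact hK

/-- The lift of a measure on `[-1, 1]` through `x = cos φ` to an even measure on `[-π, π]`: the sum
of its images under `arccos` and `-arccos`. An atom at `x = 1` is thus counted twice at `φ = 0`, and
since `arccos` is constant on `(-∞, -1]` and on `[1, ∞)`, mass outside `[-1, 1]` goes to `± π` and
`0`. -/
noncomputable def evenLift (μ : Measure ℝ) : Measure ℝ :=
  μ.map arccos + μ.map (fun x => -arccos x)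

section evenLift

variable (μ : Measure ℝ)

instance isFiniteMeasure_evenLift [IsFiniteMeasure μ] : IsFiniteMeasure (evenLift μ) := by
  unfold evenLift
  infer_instance

theorem ae_evenLift_mem_Icc : ∀ᵐ φ ∂evenLift μ, φ ∈ Set.Icc (-π) π := by
  refine ae_add_measure_iff.2
    ⟨(ae_map_iff measurable_arccos.aemeasurable measurableSet_Icc).2 (.of_forall fun y => ?_),
      (ae_map_iff measurable_arccos.neg.aemeasurable measurableSet_Icc).2 (.of_forall fun y => ?_)⟩
  · exact ⟨(neg_nonpos.2 pi_pos.le).trans (arccos_nonneg y), arccos_le_pi y⟩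
  · exact ⟨neg_le_neg (arccos_le_pi y), (neg_nonpos.2 (arccos_nonneg y)).trans pi_pos.le⟩

variable {μ}

theorem integral_evenLift {E : Type*} [NormedAddCommGroup E] [NormedSpace ℝ E] {t : ℝ → E}
    (ht : Integrable t (evenLift μ)) :
    ∫ φ, t φ ∂evenLift μ = ∫ y, (t (arccos y) + t (-arccos y)) ∂μ := by
  have hpos : AEMeasurable arccos μ := measurable_arccos.aemeasurable
  have hneg : AEMeasurable (fun y => -arccos y) μ := measurable_arccos.neg.aemeasurable
  obtain ⟨htpos, htneg⟩ := integrable_add_measure.1 ht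
  rw [evenLift, integral_add_measure htpos htneg, integral_map hpos htpos.1,
    integral_map hneg htneg.1]
  exact (integral_add (htpos.comp_aemeasurable hpos) (htneg.comp_aemeasurable hneg)).symm

theorem integral_evenLift_of_add_neg_eq (hμ : ∀ᵐ y ∂μ, y ∈ Set.Icc (-1) 1) {t q : ℝ → ℝ}
    (ht : Integrable t (evenLift μ)) (htq : ∀ φ, t φ + t (-φ) = 2 * q (cos φ)) :
    ∫ φ, t φ ∂evenLift μ = 2 * ∫ y, q y ∂μ := by
  rw [integral_evenLift ht, ← integral_const_mul]
  refine integral_congr_ae ?_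
  filter_upwards [hμ] with y hy
  rw [htq, cos_arccos hy.1 hy.2]

theorem quadrature_evenLift_iff_of_add_neg_eq [IsFiniteMeasure μ]
    (hμ : ∀ᵐ y ∂μ, y ∈ Set.Icc (-1) 1) {ι : Type*} [Fintype ι] {x : ι → ℝ}
    (hx : ∀ s, x s ∈ Set.Icc (-1) 1) (w : ι → ℝ) {t q : ℝ → ℝ} (ht : Continuous t)
    (htq : ∀ φ, t φ + t (-φ) = 2 * q (cos φ)) :
    ∫ φ, t φ ∂evenLift μ = ∑ s, w s * (t (arccos (x s)) + t (-arccos (x s))) ↔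
      ∫ y, q y ∂μ = ∑ s, w s * q (x s) := by
  have hint : Integrable t (evenLift μ) :=
    integrable_of_continuousOn_of_ae_mem_isCompact ht.continuousOn isCompact_Icc
      (ae_evenLift_mem_Icc μ)
  have hsum : ∑ s, w s * (t (arccos (x s)) + t (-arccos (x s))) = 2 * ∑ s, w s * q (x s) := by
    simp only [htq, fun s => cos_arccos (hx s).1 (hx s).2, mul_left_comm _ (2 : ℝ),
      ← Finset.mul_sum]
  rw [integral_evenLift_of_add_neg_eq hμ hint htq, hsum]
  exact mul_right_inj' two_ne_zero

end evenLift

theorem stmt18_general {ι : Type*} [Fintype ι] (l : ℕ) (μ : Measure ℝ) [IsFiniteMeasure μ]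
    (hμ : ∀ᵐ y ∂μ, y ∈ Set.Icc (-1) 1) (x : ι → ℝ) (hx : ∀ s, x s ∈ Set.Icc (-1) 1) (w : ι → ℝ) :
    (∀ p : ℝ[X], p.natDegree ≤ l → ∫ y, p.eval y ∂μ = ∑ s, w s * p.eval (x s)) ↔
    (∀ t : ℝ → ℝ, TrigPoly l 0 t →
      ∫ φ, t φ ∂evenLift μ = ∑ s, w s * (t (arccos (x s)) + t (-arccos (x s)))) := by
  constructor
  · intro hpoly t ht
    obtain ⟨q, hq, htq⟩ := ht.exists_add_neg_eq_eval_cos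
    exact (quadrature_evenLift_iff_of_add_neg_eq hμ hx w ht.continuous htq).2 (hpoly q hq)
  · intro htrig p hp
    have ht := trigPoly_eval_cos hp
    refine (quadrature_evenLift_iff_of_add_neg_eq hμ hx w ht.continuous fun φ => ?_).1 (htrig _ ht)
    rw [cos_neg, two_mul]

theorem stmt18
    (n m : ℕ) (hn : 1 ≤ n) (hm : m ≤ 2 * n - 1)
    (ψm : Measure ℝ) [IsFiniteMeasure ψm]
    (hψsupp : ψm (Set.Icc (-1 : ℝ) 1)ᶜ = 0)
    -- `σ` is the symmetric measure on `[-π, π]` with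
    -- `σ(φ) = ψ(1) - ψ(cos φ)` for `0 ≤ φ ≤ π` and
    -- `σ(φ) = ψ(cos φ) - ψ(1)` for `-π ≤ φ ≤ 0`
    (σ : Measure ℝ)
    (hσ : σ = Measure.map Real.arccos ψm +
      Measure.map (fun x => -Real.arccos x) ψm)
    (x : Fin n → ℝ) (hxdec : StrictAnti x)
    (hxrange : ∀ s, x s ∈ Set.Ioo (-1 : ℝ) 1)
    (lam : Fin n → ℝ) (hlam : ∀ s, 0 < lam s)
    (φs : Fin n → ℝ) (hφs : ∀ s, φs s = Real.arccos (x s)) :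
    (∀ p : Polynomial ℝ, p.natDegree ≤ 2 * n - 1 - m →
        ∫ y, p.eval y ∂ψm = ∑ s, lam s * p.eval (x s)) ↔
    (∀ t : ℝ → ℝ, TrigPoly (2 * n - 1 - m) 0 t →
        ∫ φ, t φ ∂σ = ∑ s, lam s * (t (φs s) + t (-(φs s)))) := by
  rw [hσ, funext hφs]
  exact stmt18_general _ ψm hψsupp x (fun s => Set.Ioo_subset_Icc_self (hxrange s)) lam
end
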